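/- Let Ω be an open subset of ℝⁿ and let f = (u, v) be an H-continuous pair on Ω. Then the pair g = (−v, −u) is H-continuous, and the constant zero pair (0, 0) is the unique H-continuous pair (p_l, p_u) satisfying u(x) − v(x) ≤ p_l(x) ≤ p_u(x) ≤ v(x) − u(x) for all x ∈ Ω; that is, f ⊕ g is the zero function, so g is an additive inverse of f. -/

import Mathlib

open Set

/-- Points of `ℝⁿ`. -/
abbrev Pt (n : ℕ) := EuclideanSpace ℝ (Fin n)

/-- Lower Baire operator `I(D,Ω,f)(x) = sup_{δ>0} inf { f y : y ∈ B_δ(x) ∩ D }`,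
where `B_δ(x) = { y ∈ Ω : ‖y - x‖ < δ }`. -/
noncomputable def Ilow {n : ℕ} (D Om : Set (Pt n)) (f : Pt n → ℝ) (x : Pt n) : ℝ :=
  sSup {a : ℝ | ∃ δ : ℝ, 0 < δ ∧
    a = sInf (f '' {y | y ∈ Om ∧ ‖y - x‖ < δ ∧ y ∈ D})}

/-- Upper Baire operator `S(D,Ω,f)(x) = inf_{δ>0} sup { f y : y ∈ B_δ(x) ∩ D }`. -/
noncomputable def Shigh {n : ℕ} (D Om : Set (Pt n)) (f : Pt n → ℝ) (x : Pt n) : ℝ :=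
  sInf {a : ℝ | ∃ δ : ℝ, 0 < δ ∧
    a = sSup (f '' {y | y ∈ Om ∧ ‖y - x‖ < δ ∧ y ∈ D})}

/-- `f`, defined on `D ⊆ Ω`, is locally bounded relative to `Ω`. -/
def LocBddOn {n : ℕ} (Om D : Set (Pt n)) (f : Pt n → ℝ) : Prop :=
  ∀ x ∈ Om, ∃ δ : ℝ, 0 < δ ∧ ∃ M : ℝ,
    ∀ y, y ∈ Om → ‖y - x‖ < δ → y ∈ D → |f y| < M

/-- `(u, v)` encodes an interval-valued function `x ↦ [u x, v x]` on `Om`. -/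
def IntervalPair {n : ℕ} (Om : Set (Pt n)) (u v : Pt n → ℝ) : Prop :=
  LocBddOn Om Om u ∧ LocBddOn Om Om v ∧ ∀ x ∈ Om, u x ≤ v x

/-- The pair `(u, v)` is S-continuous on `Om`: `I(u) = u` and `S(v) = v`. -/
def SCont {n : ℕ} (Om : Set (Pt n)) (u v : Pt n → ℝ) : Prop :=
  ∀ x ∈ Om, Ilow Om Om u x = u x ∧ Shigh Om Om v x = v x

/-- The pair `(u, v)` is Hausdorff continuous on `Om`. -/
def HCont {n : ℕ} (Om : Set (Pt n)) (u v : Pt n → ℝ) : Prop :=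
  ∀ p q : Pt n → ℝ, LocBddOn Om Om p → LocBddOn Om Om q →
    (∀ x ∈ Om, u x ≤ p x ∧ p x ≤ q x ∧ q x ≤ v x) →
    ∀ x ∈ Om, Ilow Om Om p x = u x ∧ Shigh Om Om q x = v x

/-- `(u, v)` is an H-continuous interval pair on `Om`. -/
def HContPair {n : ℕ} (Om : Set (Pt n)) (u v : Pt n → ℝ) : Prop :=
  IntervalPair Om u v ∧ HCont Om u v

/-- Lower endpoint of the pointwise interval product. -/
noncomputable def imin {n : ℕ} (u₁ v₁ u₂ v₂ : Pt n → ℝ) (x : Pt n) : ℝ :=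
  min (min (u₁ x * u₂ x) (u₁ x * v₂ x)) (min (v₁ x * u₂ x) (v₁ x * v₂ x))

/-- Upper endpoint of the pointwise interval product. -/
noncomputable def imax {n : ℕ} (u₁ v₁ u₂ v₂ : Pt n → ℝ) (x : Pt n) : ℝ :=
  max (max (u₁ x * u₂ x) (u₁ x * v₂ x)) (max (v₁ x * u₂ x) (v₁ x * v₂ x))

/-- `(pl, pu)` is the H-continuous pair contained pointwise in the interval sum of
`(u₁, v₁)` and `(u₂, v₂)`, i.e. `(pl, pu) = (u₁,v₁) ⊕ (u₂,v₂)`. -/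
def IsOplus {n : ℕ} (Om : Set (Pt n)) (u₁ v₁ u₂ v₂ pl pu : Pt n → ℝ) : Prop :=
  HContPair Om pl pu ∧
    ∀ x ∈ Om, u₁ x + u₂ x ≤ pl x ∧ pl x ≤ pu x ∧ pu x ≤ v₁ x + v₂ x

/-- `(ql, qu)` is the H-continuous pair contained pointwise in the interval product of
`(u₁, v₁)` and `(u₂, v₂)`, i.e. `(ql, qu) = (u₁,v₁) ⊗ (u₂,v₂)`. -/
def IsOtimes {n : ℕ} (Om : Set (Pt n)) (u₁ v₁ u₂ v₂ ql qu : Pt n → ℝ) : Prop :=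
  HContPair Om ql qu ∧
    ∀ x ∈ Om, imin u₁ v₁ u₂ v₂ x ≤ ql x ∧ ql x ≤ qu x ∧ qu x ≤ imax u₁ v₁ u₂ v₂ x

/-
If `S(f) = f`, then `f` is upper semicontinuous, and `S(f)` lies below every upper semicontinuous
majorant of `f`. So suppose `(u, v)` and `(p, q)` are H-continuous with `p ≤ v - u`. Then `v - p` is
an upper semicontinuous majorant of `u`, whence `v = S(u) ≤ v - p`, i.e. `p ≤ 0`, and therefore
`q = S(p) ≤ 0`. Applied to `(p, q)` and to its negative `(-q, -p)`, this forces any pair inside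
`[u - v, v - u]` to vanish.
-/

open Metric Topology

section BaireOperators

variable {n : ℕ} {D Om : Set (Pt n)} {f g : Pt n → ℝ} {x : Pt n}

theorem Ilow_eq_neg_Shigh_neg (D Om : Set (Pt n)) (f : Pt n → ℝ) (x : Pt n) :
    Ilow D Om f x = -Shigh D Om (-f) x := by
  have sSup_image_neg (s : Set (Pt n)) : sSup ((-f) '' s) = -sInf (f '' s) := by
    rw [Real.sInf_def, neg_neg, ← image_neg_eq_neg, image_image]
    rfl
  simp only [Ilow, Shigh, sSup_image_neg]
  rw [Real.sInf_def, neg_neg]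
  congr 1
  ext a
  simp only [mem_neg, mem_ofPred_eq, neg_inj]

theorem Shigh_self_eq_iInf (Om : Set (Pt n)) (f : Pt n → ℝ) (x : Pt n) :
    Shigh Om Om f x = ⨅ δ : Ioi (0 : ℝ), sSup (f '' (Om ∩ ball x δ)) := by
  have ball_eq (δ : ℝ) : {y | y ∈ Om ∧ ‖y - x‖ < δ ∧ y ∈ Om} = Om ∩ ball x δ := by
    ext y
    simp only [mem_ofPred_eq, mem_inter_iff, mem_ball_iff_norm]
    tauto
  simp only [Shigh, ball_eq, iInf]
  congr 1
  ext a
  simp only [mem_ofPred_eq, mem_range, Subtype.exists, mem_Ioi, exists_prop, eq_comm]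

theorem bddBelow_range_sSup_image_ball (f : Pt n → ℝ) (hx : x ∈ Om) :
    BddBelow (range fun δ : Ioi (0 : ℝ) => sSup (f '' (Om ∩ ball x δ))) := by
  -- The bound `0` covers the balls on which `f` is unbounded, where `sSup` takes the value `0`.
  refine ⟨min (f x) 0, ?_⟩
  rintro _ ⟨⟨δ, hδ⟩, rfl⟩
  by_cases hb : BddAbove (f '' (Om ∩ ball x δ))
  · exact min_le_of_left_le (le_csSup hb (mem_image_of_mem f ⟨hx, mem_ball_self hδ⟩))
  · exact min_le_of_right_le (Real.sSup_of_not_bddAbove hb).ge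

theorem Shigh_le_sSup_image_ball (f : Pt n → ℝ) (hx : x ∈ Om) {δ : ℝ} (hδ : 0 < δ) :
    Shigh Om Om f x ≤ sSup (f '' (Om ∩ ball x δ)) := by
  rw [Shigh_self_eq_iInf]
  exact ciInf_le (bddBelow_range_sSup_image_ball f hx) ⟨δ, hδ⟩

theorem Shigh_le_of_eventually_le {c : ℝ} (hx : x ∈ Om) (h : ∀ᶠ y in 𝓝[Om] x, f y ≤ c) :
    Shigh Om Om f x ≤ c := by
  obtain ⟨δ, hδ, hball⟩ := nhdsWithin_basis_ball.eventually_iff.1 h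
  refine (Shigh_le_sSup_image_ball f hx hδ).trans ?_
  refine csSup_le ⟨f x, mem_image_of_mem f ⟨hx, mem_ball_self hδ⟩⟩ ?_
  rintro _ ⟨y, ⟨hy, hyx⟩, rfl⟩
  exact hball ⟨hyx, hy⟩

theorem Shigh_le_of_le_of_upperSemicontinuousOn (hg : UpperSemicontinuousOn g Om)
    (hfg : ∀ y ∈ Om, f y ≤ g y) (hx : x ∈ Om) : Shigh Om Om f x ≤ g x := by
  refine le_of_forall_gt_imp_ge_of_dense fun c hc => Shigh_le_of_eventually_le hx ?_
  filter_upwards [hg x hx c hc, self_mem_nhdsWithin] with y hyc hy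
  exact (hfg y hy).trans hyc.le

-- If `f` were unbounded on one ball, then around each of its points `z` a larger ball would have
-- junk supremum `0`, so that `f z = S(f)(z) ≤ 0`.
theorem bddAbove_image_ball_of_Shigh_eq (h : ∀ z ∈ Om, Shigh Om Om f z = f z) (x : Pt n) (δ : ℝ) :
    BddAbove (f '' (Om ∩ ball x δ)) := by
  by_contra hb
  refine hb ⟨0, ?_⟩
  rintro _ ⟨z, ⟨hz, hzx⟩, rfl⟩
  have hδ : 0 < δ := pos_of_mem_ball hzx
  have ball_subset : ball x δ ⊆ ball z (δ + δ) :=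
    ball_subset_ball' (by gcongr; exact (mem_ball'.1 hzx).le)
  have hb' : ¬BddAbove (f '' (Om ∩ ball z (δ + δ))) :=
    mt (BddAbove.mono (image_mono (inter_subset_inter_right Om ball_subset))) hb
  calc f z = Shigh Om Om f z := (h z hz).symm
    _ ≤ sSup (f '' (Om ∩ ball z (δ + δ))) := Shigh_le_sSup_image_ball f hz (by positivity)
    _ = 0 := Real.sSup_of_not_bddAbove hb'

theorem upperSemicontinuousOn_of_Shigh_eq (h : ∀ z ∈ Om, Shigh Om Om f z = f z) :
    UpperSemicontinuousOn f Om := by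
  intro x hx c hc
  rw [← h x hx, Shigh_self_eq_iInf] at hc
  obtain ⟨⟨δ, hδ⟩, hsup⟩ := exists_lt_of_ciInf_lt hc
  filter_upwards [self_mem_nhdsWithin, mem_nhdsWithin_of_mem_nhds (ball_mem_nhds x hδ)]
    with y hy hyx
  have hle := le_csSup (bddAbove_image_ball_of_Shigh_eq h x δ) (mem_image_of_mem f ⟨hy, hyx⟩)
  exact hle.trans_lt hsup

theorem Shigh_eq_of_eqOn_const {c : ℝ} (hf : EqOn f (fun _ => c) Om) (hx : x ∈ Om) :
    Shigh Om Om f x = c := by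
  have sSup_image_ball (δ : Ioi (0 : ℝ)) : sSup (f '' (Om ∩ ball x δ)) = c := by
    have hne : (Om ∩ ball x δ).Nonempty := ⟨x, hx, mem_ball_self δ.2⟩
    rw [(hf.mono inter_subset_left).image_eq, hne.image_const, csSup_singleton]
  simp only [Shigh_self_eq_iInf, sSup_image_ball, ciInf_const]

theorem Ilow_eq_of_eqOn_const {c : ℝ} (hf : EqOn f (fun _ => c) Om) (hx : x ∈ Om) :
    Ilow Om Om f x = c := by
  have hf_neg : EqOn (-f) (fun _ => -c) Om := fun y hy => congrArg Neg.neg (hf hy)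
  rw [Ilow_eq_neg_Shigh_neg, Shigh_eq_of_eqOn_const hf_neg hx, neg_neg]

theorem LocBddOn.neg (h : LocBddOn Om D f) : LocBddOn Om D (-f) := by
  simpa only [LocBddOn, Pi.neg_apply, abs_neg] using h

theorem locBddOn_const (Om D : Set (Pt n)) (c : ℝ) : LocBddOn Om D fun _ => c :=
  fun _ _ => ⟨1, one_pos, |c| + 1, fun _ _ _ _ => lt_add_one |c|⟩

end BaireOperators

namespace HContPair

variable {n : ℕ} {Om : Set (Pt n)} {u v p q : Pt n → ℝ}

theorem const (Om : Set (Pt n)) (c : ℝ) : HContPair Om (fun _ => c) fun _ => c := by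
  refine ⟨⟨locBddOn_const Om Om c, locBddOn_const Om Om c, fun _ _ => le_rfl⟩, ?_⟩
  intro p q _ _ hpq x hx
  have hp : EqOn p (fun _ => c) Om := fun y hy =>
    le_antisymm ((hpq y hy).2.1.trans (hpq y hy).2.2) (hpq y hy).1
  have hq : EqOn q (fun _ => c) Om := fun y hy =>
    le_antisymm (hpq y hy).2.2 ((hpq y hy).1.trans (hpq y hy).2.1)
  exact ⟨Ilow_eq_of_eqOn_const hp hx, Shigh_eq_of_eqOn_const hq hx⟩

theorem neg (h : HContPair Om u v) : HContPair Om (-v) (-u) := by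
  obtain ⟨⟨hu, hv, huv⟩, hcont⟩ := h
  refine ⟨⟨hv.neg, hu.neg, fun x hx => neg_le_neg (huv x hx)⟩, ?_⟩
  intro p q hp hq hpq x hx
  have neg_mem : ∀ y ∈ Om, u y ≤ (-q) y ∧ (-q) y ≤ (-p) y ∧ (-p) y ≤ v y := fun y hy =>
    ⟨le_neg_of_le_neg (hpq y hy).2.2, neg_le_neg (hpq y hy).2.1, neg_le_of_neg_le (hpq y hy).1⟩
  obtain ⟨hI, hS⟩ := hcont (-q) (-p) hq.neg hp.neg neg_mem x hx
  rw [Ilow_eq_neg_Shigh_neg, neg_neg] at hI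
  rw [Ilow_eq_neg_Shigh_neg, hS]
  exact ⟨rfl, neg_eq_iff_eq_neg.1 hI⟩

theorem Shigh_left (h : HContPair Om u v) : ∀ x ∈ Om, Shigh Om Om u x = v x := fun x hx =>
  (h.2 u u h.1.1 h.1.1 (fun y hy => ⟨le_rfl, le_rfl, h.1.2.2 y hy⟩) x hx).2

theorem Shigh_right (h : HContPair Om u v) : ∀ x ∈ Om, Shigh Om Om v x = v x := fun x hx =>
  (h.2 v v h.1.2.1 h.1.2.1 (fun y hy => ⟨h.1.2.2 y hy, le_rfl, le_rfl⟩) x hx).2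

theorem upperSemicontinuousOn_right (h : HContPair Om u v) : UpperSemicontinuousOn v Om :=
  upperSemicontinuousOn_of_Shigh_eq h.Shigh_right

theorem right_le_of_left_le {g : Pt n → ℝ} (h : HContPair Om u v)
    (hg : UpperSemicontinuousOn g Om) (hug : ∀ x ∈ Om, u x ≤ g x) : ∀ x ∈ Om, v x ≤ g x :=
  fun x hx => (h.Shigh_left x hx).ge.trans (Shigh_le_of_le_of_upperSemicontinuousOn hg hug hx)

theorem right_nonpos_of_left_le_sub (huv : HContPair Om u v) (hpq : HContPair Om p q)
    (hle : ∀ x ∈ Om, p x ≤ v x - u x) : ∀ x ∈ Om, q x ≤ 0 := by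
  have husc : UpperSemicontinuousOn (fun x => v x + (-p) x) Om :=
    huv.upperSemicontinuousOn_right.add hpq.neg.upperSemicontinuousOn_right
  have hv : ∀ x ∈ Om, v x ≤ v x + (-p) x :=
    huv.right_le_of_left_le husc fun x hx => le_sub_comm.1 (hle x hx)
  have hp : ∀ x ∈ Om, p x ≤ 0 := fun x hx => neg_nonneg.1 (le_add_iff_nonneg_right _ |>.1 (hv x hx))
  exact hpq.right_le_of_left_le upperSemicontinuousOn_const hp

theorem eq_zero_of_mem_sub (huv : HContPair Om u v) (hpq : HContPair Om p q)
    (hmem : ∀ x ∈ Om, u x - v x ≤ p x ∧ p x ≤ q x ∧ q x ≤ v x - u x) :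
    ∀ x ∈ Om, p x = 0 ∧ q x = 0 := by
  have hq : ∀ x ∈ Om, q x ≤ 0 := huv.right_nonpos_of_left_le_sub hpq
    fun x hx => (hmem x hx).2.1.trans (hmem x hx).2.2
  have hp : ∀ x ∈ Om, (-p) x ≤ 0 := huv.right_nonpos_of_left_le_sub hpq.neg fun x hx =>
    neg_le.1 ((neg_sub (v x) (u x)).trans_le ((hmem x hx).1.trans (hmem x hx).2.1))
  intro x hx
  have hpx : 0 ≤ p x := neg_nonpos.1 (hp x hx)
  have hpqx : p x ≤ q x := (hmem x hx).2.1
  exact ⟨le_antisymm (hpqx.trans (hq x hx)) hpx, le_antisymm (hq x hx) (hpx.trans hpqx)⟩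

end HContPair

theorem stmt11_general {n : ℕ} {Om : Set (Pt n)} {u v : Pt n → ℝ} (h : HContPair Om u v) :
    HContPair Om (fun x => -(v x)) (fun x => -(u x)) ∧
    HContPair Om (fun _ => (0 : ℝ)) (fun _ => (0 : ℝ)) ∧
    ∀ pl pu : Pt n → ℝ, HContPair Om pl pu →
      (∀ x ∈ Om, u x - v x ≤ pl x ∧ pl x ≤ pu x ∧ pu x ≤ v x - u x) →
      ∀ x ∈ Om, pl x = 0 ∧ pu x = 0 :=
  ⟨h.neg, HContPair.const Om 0, fun _ _ => h.eq_zero_of_mem_sub⟩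

theorem stmt11 {n : ℕ} (Om : Set (Pt n)) (hOm : IsOpen Om)
    (u v : Pt n → ℝ) (h : HContPair Om u v) :
    HContPair Om (fun x => -(v x)) (fun x => -(u x)) ∧
    HContPair Om (fun _ => (0 : ℝ)) (fun _ => (0 : ℝ)) ∧
    ∀ pl pu : Pt n → ℝ, HContPair Om pl pu →
      (∀ x ∈ Om, u x - v x ≤ pl x ∧ pl x ≤ pu x ∧ pu x ≤ v x - u x) →
      ∀ x ∈ Om, pl x = 0 ∧ pu x = 0 :=
  stmt11_general h
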